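/- For all x, y ∈ ℝⁿ with x ≠ y, the F-line D^∞(x,y) is a path-connected subset of ℝⁿ. -/

import Mathlib

/-! The line is a finite union of arcs, which can be listed explicitly. A parameter tuple
`(t, r, s, w)` with `⊞ (t, r, s, w) = 1` in which `r = -t` or `w = -s` gives the point `y` or `x`.
Otherwise, after permuting, `t` dominates `r` and `s` dominates `w`, and two cases remain.

* `s = -t`: the point is `ray x y t`, with `1 ≤ |t|`, which is affine in `t`.
* `s ≠ -t`: the dominant one of `t, s` equals `1`; if it is `t`, the point is `arc x y s c` with
  `-1 < s ≤ 1` and `|c| ≤ 1`. Coordinate by coordinate this is the larger in modulus of `x i` and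
  `s * y i`, except where these two are opposite, where it is `c * x i`. If it is `s`, the roles of
  `x` and `y` are exchanged.

The arc `s ↦ arc x y s 1` jumps at the finitely many values of `s` for which some `s * y i = -x i`,
but the segment `c ↦ arc x y s c` lies in the line and bridges the jump. Hence any two nearby values
of `s` give joined points (`arc_joined_nhds`), and connectedness of `[0, 1]` joins the whole arc
to its starting point `x` (`arc_joined`). The arcs from `x` and from `y` meet at `s = 1`, and the
two rays start at the ends `s = -1` of these arcs. -/

open Filter Finset

/-- The binary idempotent operation `⊞`. -/
noncomputable def bop (a b : ℝ) : ℝ :=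
  if |b| < |a| then a else if |a| < |b| then b else (a + b) / 2

/-- The unique real `(2p+1)`-th root of `t`. -/
noncomputable def oddRoot (p : ℕ) (t : ℝ) : ℝ :=
  Real.sign t * |t| ^ ((1 : ℝ) / (2 * (p : ℝ) + 1))

/-- `ξ_I[u](α) = Card{i ∈ I : u i = α} − Card{i ∈ I : u i = −α}`. -/
noncomputable def xiMap {ι : Type*} (I : Finset ι) (u : ι → ℝ) (α : ℝ) : ℤ :=
  ((I.filter fun i => u i = α).card : ℤ) - ((I.filter fun i => u i = -α).card : ℤ)

/-- The residual index set `J_I(u)`. -/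
noncomputable def resid {ι : Type*} (I : Finset ι) (u : ι → ℝ) : Finset ι :=
  I.filter fun i => xiMap I u (u i) ≠ 0

/-- The `n`-ary extension `⊞_{i ∈ I} u i` of the binary operation `⊞`. -/
noncomputable def Fop {ι : Type*} (I : Finset ι) (u : ι → ℝ) : ℝ :=
  if h : (resid I u).Nonempty then
    if 0 < xiMap I u ((resid I u).sup' h fun i => |u i|) then (resid I u).sup' h u
    else if xiMap I u ((resid I u).sup' h fun i => |u i|) < 0 then (resid I u).inf' h u
    else 0
  else 0

/-- The Chebyshev norm `max_{i ∈ [n]} |x i|`. -/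
noncomputable def chebNorm {n : ℕ} (x : Fin n → ℝ) : ℝ := ⨆ i, |x i|

/-- The ultrametric distance `d_⊞(x,y) = max_i |x_i ⊟ y_i|`. -/
noncomputable def dB {n : ℕ} (x y : Fin n → ℝ) : ℝ := ⨆ i, |bop (x i) (-(y i))|

/-- The F-line `D^∞(x,y)`. -/
noncomputable def fLine {n : ℕ} (x y : Fin n → ℝ) : Set (Fin n → ℝ) :=
  { z | ∃ t r s w : ℝ, Fop (Finset.univ : Finset (Fin 4)) ![t, r, s, w] = 1 ∧
      z = fun i => Fop (Finset.univ : Finset (Fin 4)) ![t * x i, r * x i, s * y i, w * y i] }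

/-! ### The four-ary operation -/

/-- The contribution of one entry `b` to `xiMap`. -/
noncomputable def xiTerm (b α : ℝ) : ℤ :=
  (if b = α then 1 else 0) - (if b = -α then 1 else 0)

lemma xiMap_four (a b c d α : ℝ) :
    xiMap (Finset.univ : Finset (Fin 4)) ![a, b, c, d] α =
      xiTerm a α + xiTerm b α + xiTerm c α + xiTerm d α := by
  have key : ∀ γ : ℝ, (((Finset.univ : Finset (Fin 4)).filter fun i => ![a, b, c, d] i = γ).card : ℤ)
      = (if a = γ then 1 else 0) + (if b = γ then 1 else 0) + (if c = γ then 1 else 0)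
        + (if d = γ then 1 else 0) := by
    intro γ
    rw [← Finset.sum_boole, Fin.sum_univ_four]
    rfl
  simp only [xiMap, xiTerm]
  rw [key, key]
  ring

lemma xiTerm_neg_left (a α : ℝ) : xiTerm (-a) α = - xiTerm a α := by
  have h1 : (-a = α) ↔ a = -α := neg_eq_iff_eq_neg
  have h2 : (-a = -α) ↔ a = α := neg_inj
  simp only [xiTerm, h1, h2]
  ring

lemma xiTerm_self {a : ℝ} (ha : a ≠ 0) : xiTerm a a = 1 := by
  simp [xiTerm, self_eq_neg, ha]

lemma xiTerm_of_abs_ne {a α : ℝ} (h : |a| ≠ |α|) : xiTerm a α = 0 := by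
  have h1 : a ≠ α := by rintro rfl; exact h rfl
  have h2 : a ≠ -α := by rintro rfl; exact h (abs_neg α)
  simp [xiTerm, h1, h2]

lemma xiTerm_nonneg {a α : ℝ} (h : a ≠ -α) : 0 ≤ xiTerm a α := by
  simp only [xiTerm, h, if_false]
  split_ifs <;> simp

lemma xiMap_neg {ι : Type*} (I : Finset ι) (u : ι → ℝ) (α : ℝ) :
    xiMap I u (-α) = - xiMap I u α := by
  simp [xiMap]

lemma exists_of_xiMap_pos {ι : Type*} {I : Finset ι} {u : ι → ℝ} {α : ℝ}
    (h : 0 < xiMap I u α) : ∃ i ∈ I, u i = α := by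
  by_contra! hc
  have : (I.filter fun i => u i = α) = ∅ := Finset.filter_eq_empty_iff.2 fun i hi => hc i hi
  simp only [xiMap, this, Finset.card_empty] at h
  omega

/-- `Fop` is the entry of largest modulus among those that are not cancelled. -/
lemma Fop_eq {ι : Type*} {I : Finset ι} {u : ι → ℝ} {β : ℝ} (hβ : 0 < xiMap I u β)
    (hmax : ∀ i ∈ I, |β| < |u i| → xiMap I u (u i) = 0) : Fop I u = β := by
  obtain ⟨k, hkI, hk⟩ := exists_of_xiMap_pos hβ
  have hkr : k ∈ resid I u := by
    simp only [resid, Finset.mem_filter]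
    exact ⟨hkI, by rw [hk]; exact hβ.ne'⟩
  have hle : ∀ i ∈ resid I u, |u i| ≤ |β| := by
    intro i hi
    simp only [resid, Finset.mem_filter] at hi
    by_contra! hc
    exact hi.2 (hmax i hi.1 hc)
  have hne : (resid I u).Nonempty := ⟨k, hkr⟩
  have hsup : ((resid I u).sup' hne fun i => |u i|) = |β| := by
    apply le_antisymm
    · exact Finset.sup'_le _ _ hle
    · have := Finset.le_sup' (fun i => |u i|) hkr
      rwa [hk] at this
  unfold Fop
  rw [dif_pos hne, hsup]
  rcases le_or_gt 0 β with h0 | h0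
  · rw [abs_of_nonneg h0] at hle ⊢
    rw [if_pos hβ]
    apply le_antisymm
    · exact Finset.sup'_le _ _ fun i hi => (le_abs_self _).trans (hle i hi)
    · have := Finset.le_sup' u hkr
      rwa [hk] at this
  · rw [abs_of_neg h0] at hle ⊢
    rw [xiMap_neg, if_neg (by omega), if_pos (by omega)]
    apply le_antisymm
    · have := Finset.inf'_le u hkr
      rwa [hk] at this
    · refine Finset.le_inf' _ _ fun i hi => ?_
      have := neg_abs_le (u i)
      have := hle i hi
      linarith

lemma Fop_eq_zero {ι : Type*} {I : Finset ι} {u : ι → ℝ}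
    (h : ∀ α, xiMap I u α = 0) : Fop I u = 0 := by
  have : ¬ (resid I u).Nonempty := by
    simp [resid, h]
  simp [Fop, this]

/-- `Fop` depends on the tuple only through its counting function. -/
lemma Fop_congr {ι : Type*} {I : Finset ι} {u v : ι → ℝ}
    (h : ∀ α, xiMap I u α = xiMap I v α) : Fop I u = Fop I v := by
  by_cases hz : ∀ α, xiMap I v α = 0
  · rw [Fop_eq_zero hz, Fop_eq_zero fun α => (h α).trans (hz α)]
  -- a nonvanishing value of the counting function can be made positive by changing its argument
  have hpos : ∀ α, xiMap I v α ≠ 0 → 0 < xiMap I v α ∨ 0 < xiMap I v (-α) := by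
    intro α hα
    rw [xiMap_neg]
    omega
  push Not at hz
  obtain ⟨α, hα⟩ := hz
  have hne : (resid I v).Nonempty := by
    rcases hpos α hα with h1 | h1 <;>
    · obtain ⟨i, hi, hi'⟩ := exists_of_xiMap_pos h1
      exact ⟨i, by simp only [resid, Finset.mem_filter]; exact ⟨hi, by rw [hi']; exact h1.ne'⟩⟩
  obtain ⟨k, hk, hkmax⟩ := Finset.exists_max_image _ (fun i => |v i|) hne
  have hlarge : ∀ γ, |v k| < |γ| → xiMap I v γ = 0 := by
    intro γ hγ
    by_contra hc
    rcases hpos γ hc with h1 | h1 <;>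
    · obtain ⟨i, hi, hi'⟩ := exists_of_xiMap_pos h1
      have := hkmax i (by
        simp only [resid, Finset.mem_filter]; exact ⟨hi, by rw [hi']; exact h1.ne'⟩)
      simp only [hi', abs_neg] at this
      linarith
  have hk0 : xiMap I v (v k) ≠ 0 := by
    simp only [resid, Finset.mem_filter] at hk
    exact hk.2
  obtain ⟨β, hβ, hβk⟩ : ∃ β, 0 < xiMap I v β ∧ |β| = |v k| := by
    rcases hpos _ hk0 with h1 | h1
    · exact ⟨_, h1, rfl⟩
    · exact ⟨_, h1, abs_neg _⟩
  rw [Fop_eq (u := v) hβ fun i _ hi => hlarge _ (hβk ▸ hi),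
    Fop_eq (u := u) (β := β) (by rwa [h]) fun i _ hi => by rw [h]; exact hlarge _ (hβk ▸ hi)]

lemma Fop_swap01 (a b c d : ℝ) :
    Fop (Finset.univ : Finset (Fin 4)) ![a, b, c, d] = Fop Finset.univ ![b, a, c, d] :=
  Fop_congr fun α => by rw [xiMap_four, xiMap_four]; ring

lemma Fop_swap23 (a b c d : ℝ) :
    Fop (Finset.univ : Finset (Fin 4)) ![a, b, c, d] = Fop Finset.univ ![a, b, d, c] :=
  Fop_congr fun α => by rw [xiMap_four, xiMap_four]; ring

lemma Fop_swap_pairs (a b c d : ℝ) :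
    Fop (Finset.univ : Finset (Fin 4)) ![a, b, c, d] = Fop Finset.univ ![c, d, a, b] :=
  Fop_congr fun α => by rw [xiMap_four, xiMap_four]; ring

/-- An entry that dominates all others and is cancelled by none is the value. -/
lemma Fop_dom {a b c d : ℝ} (hb : |b| ≤ |a|) (hc : |c| ≤ |a|) (hd : |d| ≤ |a|)
    (hb' : b ≠ -a) (hc' : c ≠ -a) (hd' : d ≠ -a) :
    Fop (Finset.univ : Finset (Fin 4)) ![a, b, c, d] = a := by
  have ha : a ≠ 0 := by
    rintro rfl
    simp at hb hb'
    exact hb' hb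
  apply Fop_eq
  · rw [xiMap_four, xiTerm_self ha]
    have := xiTerm_nonneg hb'
    have := xiTerm_nonneg hc'
    have := xiTerm_nonneg hd'
    omega
  · intro i _ hi
    exfalso
    fin_cases i <;> simp at hi <;> linarith

/-- If two of the four entries cancel, the operation reduces to `bop` of the other two. -/
lemma Fop_eq_bop {u : Fin 4 → ℝ} {b d : ℝ}
    (h : ∀ α, xiMap Finset.univ u α = xiTerm b α + xiTerm d α) :
    Fop Finset.univ u = bop b d := by
  unfold bop
  split_ifs with h1 h2
  · have hb : b ≠ 0 := by rintro rfl; simp at h1; linarith [abs_nonneg d]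
    apply Fop_eq
    · rw [h, xiTerm_self hb, xiTerm_of_abs_ne h1.ne]; norm_num
    · intro i _ hi
      rw [h, xiTerm_of_abs_ne hi.ne, xiTerm_of_abs_ne (h1.trans hi).ne]; norm_num
  · have hd : d ≠ 0 := by rintro rfl; simp at h2; linarith [abs_nonneg b]
    apply Fop_eq
    · rw [h, xiTerm_self hd, xiTerm_of_abs_ne h2.ne]; norm_num
    · intro i _ hi
      rw [h, xiTerm_of_abs_ne hi.ne, xiTerm_of_abs_ne (h2.trans hi).ne]; norm_num
  · rcases abs_eq_abs.1 (le_antisymm (not_lt.1 h1) (not_lt.1 h2)) with rfl | rfl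
    · by_cases hb : b = 0
      · subst hb
        rw [Fop_eq_zero]
        · norm_num
        · intro α
          rw [h]
          have := xiTerm_neg_left 0 α
          rw [neg_zero] at this
          omega
      · rw [show (b + b) / 2 = b by ring]
        apply Fop_eq
        · rw [h, xiTerm_self hb]; norm_num
        · intro i _ hi
          rw [h, xiTerm_of_abs_ne hi.ne]; norm_num
    · rw [Fop_eq_zero]
      · ring
      · intro α
        rw [h, xiTerm_neg_left]; ring

lemma Fop_cancel_inner (a c d : ℝ) :
    Fop (Finset.univ : Finset (Fin 4)) ![a, -a, c, d] = bop c d :=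
  Fop_eq_bop fun α => by rw [xiMap_four, xiTerm_neg_left]; ring

lemma Fop_cancel_cross (a b d : ℝ) :
    Fop (Finset.univ : Finset (Fin 4)) ![a, b, -a, d] = bop b d :=
  Fop_eq_bop fun α => by rw [xiMap_four, xiTerm_neg_left]; ring

lemma bop_mul (a b k : ℝ) : bop (a * k) (b * k) = bop a b * k := by
  by_cases hk : k = 0
  · simp [hk, bop]
  · have hk' : 0 < |k| := abs_pos.2 hk
    simp only [bop, abs_mul, mul_lt_mul_iff_left₀ hk']
    split_ifs <;> ring

lemma bop_zero_right (a : ℝ) : bop a 0 = a := by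
  unfold bop
  split_ifs with h1 h2
  · rfl
  · simp at h2; linarith [abs_nonneg a]
  · simp at h1; simp [h1]

lemma bop_zero_left (a : ℝ) : bop 0 a = a := by
  unfold bop
  split_ifs with h1 h2
  · simp at h1; linarith [abs_nonneg a]
  · rfl
  · simp at h2; simp [h2]

lemma abs_bop_le {a b m : ℝ} (ha : |a| ≤ m) (hb : |b| ≤ m) : |bop a b| ≤ m := by
  unfold bop
  rw [abs_le] at ha hb
  split_ifs <;> rw [abs_le] <;> constructor <;> linarith

/-! ### The arcs and rays that make up the line -/

/-- The point of the arc issuing from `x` at parameter `s`: the larger in modulus of `x i` and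
`s * y i`. Where these two are opposite and nonzero, the coordinate is `c * x i`, so that `c`
runs along the segment bridging the jump of the arc. -/
noncomputable def arc {n : ℕ} (x y : Fin n → ℝ) (s c : ℝ) : Fin n → ℝ := fun i =>
  if |s * y i| < |x i| then x i else if |x i| < |s * y i| then s * y i
  else if s * y i = x i then x i else c * x i

/-- The unbounded part of the line, obtained from parameters `(t, r, -t, w)`. -/
noncomputable def ray {n : ℕ} (x y : Fin n → ℝ) (t : ℝ) : Fin n → ℝ := fun i =>
  if x i = y i then x i else t * (if |y i| ≤ |x i| then x i else -y i)

lemma fLine_comm {n : ℕ} (x y : Fin n → ℝ) : fLine x y = fLine y x := by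
  have key : ∀ x y : Fin n → ℝ, fLine x y ⊆ fLine y x := by
    rintro x y z ⟨t, r, s, w, h, rfl⟩
    exact ⟨s, w, t, r, by rwa [Fop_swap_pairs], funext fun i => Fop_swap_pairs _ _ _ _⟩
  exact (key x y).antisymm (key y x)

lemma Fop_arc {r s w : ℝ} (hr : |r| ≤ 1) (hr' : r ≠ -1) (hw : |w| ≤ |s|) (hw' : w ≠ -s)
    (x y : ℝ) :
    Fop (Finset.univ : Finset (Fin 4)) ![1 * x, r * x, s * y, w * y] =
      if |s * y| < |x| then x else if |x| < |s * y| then s * y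
      else if s * y = x then x else bop r (-(w / s)) * x := by
  have hs : s ≠ 0 := by
    rintro rfl
    simp at hw hw'
    exact hw' hw
  have hrx : |r * x| ≤ |x| := by
    rw [abs_mul]; exact mul_le_of_le_one_left (abs_nonneg _) hr
  have hwy : |w * y| ≤ |s * y| := by
    rw [abs_mul, abs_mul]; exact mul_le_mul_of_nonneg_right hw (abs_nonneg _)
  have hrx' : x ≠ 0 → r * x ≠ -x := fun hx h => hr' (mul_right_cancel₀ hx (by linarith))
  have hwy' : y ≠ 0 → w * y ≠ -(s * y) := fun hy h => hw' (mul_right_cancel₀ hy (by linarith))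
  have key : ∀ {a b : ℝ}, |a| < |b| → a ≠ -b := by
    rintro a b h rfl
    simp at h
  rw [one_mul]
  split_ifs with h1 h2 h3
  · have hx : x ≠ 0 := by rintro rfl; rw [abs_zero] at h1; linarith [abs_nonneg (s * y)]
    exact Fop_dom hrx h1.le (hwy.trans h1.le) (hrx' hx) (key h1) (key (hwy.trans_lt h1))
  · have hy : y ≠ 0 := by rintro rfl; simp at h2; linarith [abs_nonneg x]
    rw [Fop_swap_pairs]
    exact Fop_dom hwy h2.le (hrx.trans h2.le) (hwy' hy) (key h2) (key (hrx.trans_lt h2))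
  · by_cases hx : x = 0
    · have hy : y = 0 := by
        rw [hx] at h3
        exact (mul_eq_zero.1 h3).resolve_left hs
      have := Fop_cancel_inner 0 0 0
      subst hx hy
      simpa [bop] using this
    · have hy : y ≠ 0 := by rintro rfl; simp at h3; exact hx h3.symm
      have hwy'' := hwy' hy
      rw [h3] at hwy hwy''
      rw [h3]
      refine Fop_dom hrx le_rfl hwy (hrx' hx) ?_ hwy''
      intro h
      exact hx (self_eq_neg.1 h)
  · have h4 : s * y = -x :=
      (abs_eq_abs.1 (le_antisymm (not_lt.1 h2) (not_lt.1 h1))).resolve_left h3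
    rw [h4, Fop_cancel_cross, ← bop_mul]
    congr 1
    have : x = -(s * y) := by linarith
    rw [this]
    field_simp

lemma Fop_ray {t r w : ℝ} (hr : |r| ≤ |t|) (hr' : r ≠ -t) (hw : |w| ≤ |t|) (hw' : w ≠ t)
    (h1 : bop r w = 1) (x y : ℝ) :
    Fop (Finset.univ : Finset (Fin 4)) ![t * x, r * x, -t * y, w * y] =
      if x = y then x else t * (if |y| ≤ |x| then x else -y) := by
  have ht : t ≠ 0 := by
    rintro rfl
    simp at hr hr'
    exact hr' hr
  have hm : ∀ {k a b : ℝ}, |k| ≤ |t| → |a| ≤ |b| → |k * a| ≤ |t * b| := by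
    intro k a b hk hab
    rw [abs_mul, abs_mul]
    exact mul_le_mul hk hab (abs_nonneg _) (abs_nonneg _)
  have hlt : ∀ {k a b : ℝ}, |k| ≤ |t| → |a| < |b| → |k * a| < |t * b| := by
    intro k a b hk hab
    rw [abs_mul, abs_mul]
    exact mul_lt_mul' hk hab (abs_nonneg _) (abs_pos.2 ht)
  have hnt : |-t| ≤ |t| := (abs_neg t).le
  have hne : ∀ {a b : ℝ}, |a| < |b| → a ≠ -b := by
    rintro a b h rfl
    simp at h
  have hrx' : x ≠ 0 → r * x ≠ -(t * x) := fun hx h => hr' (mul_right_cancel₀ hx (by linarith))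
  split_ifs with hxy hle
  · subst hxy
    rw [neg_mul, Fop_cancel_cross, bop_mul, h1, one_mul]
  · have hx : x ≠ 0 := by
      rintro rfl
      simp at hle
      exact hxy hle.symm
    rcases hle.lt_or_eq with hl | he
    · exact Fop_dom (hm hr le_rfl) (hm hnt hle) (hm hw hle) (hrx' hx)
        (hne (hlt hnt hl)) (hne (hlt hw hl))
    · have hyx : y = -x := (abs_eq_abs.1 he).resolve_left fun h => hxy h.symm
      subst hyx
      refine Fop_dom (hm hr le_rfl) (hm hnt hle) (hm hw hle) (hrx' hx) ?_ ?_
      · intro h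
        exact mul_ne_zero ht hx (by linarith)
      · intro h
        exact hw' (mul_right_cancel₀ hx (by linarith))
  · push Not at hle
    have hy : y ≠ 0 := by rintro rfl; simp at hle; linarith [abs_nonneg x]
    rw [Fop_swap_pairs, show t * -y = -t * y by ring]
    have e : |-t * y| = |t * y| := by rw [neg_mul, abs_neg]
    refine Fop_dom (e ▸ hm hw le_rfl) (e ▸ hm le_rfl hle.le) (e ▸ hm hr hle.le) ?_
      (hne (e ▸ hlt le_rfl hle)) (hne (e ▸ hlt hr hle))
    intro h
    exact hw' (mul_right_cancel₀ hy (by linarith))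

lemma left_mem {n : ℕ} (x y : Fin n → ℝ) : x ∈ fLine x y := by
  refine ⟨1, 0, 0, 0, ?_, funext fun i => ?_⟩
  · have := Fop_cancel_inner 0 1 0
    rw [Fop_swap_pairs]
    simpa [bop] using this
  · have := Fop_cancel_inner 0 (x i) 0
    rw [Fop_swap_pairs]
    simpa [bop_zero_right] using this.symm

lemma arc_zero {n : ℕ} (x y : Fin n → ℝ) (c : ℝ) : arc x y 0 c = x := by
  funext i
  simp only [arc, zero_mul, abs_zero]
  split_ifs with h1 h2 h3
  · rfl
  · linarith [abs_nonneg (x i)]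
  · rfl
  · have : x i = 0 := by simpa using h1
    simp [this]

lemma arc_mem {n : ℕ} (x y : Fin n → ℝ) {s c : ℝ} (hs : -1 < s) (hs' : s ≤ 1) (hc : |c| ≤ 1) :
    arc x y s c ∈ fLine x y := by
  by_cases hs0 : s = 0
  · rw [hs0, arc_zero]
    exact left_mem x y
  have key : ∀ r w : ℝ, |r| ≤ 1 → r ≠ -1 → |w| ≤ |s| → w ≠ -s → bop r (-(w / s)) = c →
      arc x y s c ∈ fLine x y := by
    intro r w hr hr' hw hw' hb
    have hs1 : |s| ≤ 1 := abs_le.2 ⟨hs.le, hs'⟩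
    refine ⟨1, r, s, w, ?_, funext fun i => ?_⟩
    · refine Fop_dom (by rwa [abs_one]) (by rwa [abs_one]) (by rw [abs_one]; exact hw.trans hs1)
        hr' hs.ne' ?_
      · rintro rfl
        rw [abs_neg, abs_one] at hw
        have : s = 1 := by
          rcases le_abs.1 hw with h | h <;> linarith
        exact hw' (by rw [this])
    · rw [Fop_arc hr hr' hw hw', hb]
      rfl
  rcases le_total 0 c with h | h
  · refine key c 0 hc (by linarith) (by simp) ?_ (by simp [bop_zero_right])
    intro h'
    exact hs0 (by linarith)
  · refine key 0 (-c * s) (by simp) (by norm_num) ?_ ?_ ?_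
    · rw [abs_mul, abs_neg]
      exact mul_le_of_le_one_left (abs_nonneg _) hc
    · intro h'
      have : c = 1 := mul_right_cancel₀ hs0 (by linarith)
      linarith
    · rw [bop_zero_left]
      field_simp

lemma ray_mem {n : ℕ} (x y : Fin n → ℝ) {t : ℝ} (ht : 1 ≤ |t|) : ray x y t ∈ fLine x y := by
  have key : ∀ r w : ℝ, |r| ≤ |t| → r ≠ -t → |w| ≤ |t| → w ≠ t → bop r w = 1 →
      ray x y t ∈ fLine x y := by
    intro r w hr hr' hw hw' hb
    refine ⟨t, r, -t, w, ?_, funext fun i => ?_⟩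
    · rw [Fop_cancel_cross, hb]
    · rw [Fop_ray hr hr' hw hw' hb]
      rfl
  rcases le_abs.1 ht with h | h
  · exact key 1 0 (by simpa) (by linarith) (by simp) (by linarith) (bop_zero_right 1)
  · exact key 0 1 (by simp) (by linarith) (by simpa) (by linarith) (bop_zero_left 1)

/-- The part of the line where the coefficient `t` dominates lies on `arc x y`. -/
lemma exists_arc {n : ℕ} (x y : Fin n → ℝ) {t r s w : ℝ} (hr : |r| ≤ |t|) (hr' : r ≠ -t)
    (hw : |w| ≤ |s|) (hw' : w ≠ -s) (hst : |s| ≤ |t|) (hst' : s ≠ -t)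
    (h : Fop (Finset.univ : Finset (Fin 4)) ![t, r, s, w] = 1) :
    ∃ s' c : ℝ, -1 < s' ∧ s' ≤ 1 ∧ |c| ≤ 1 ∧
      (fun i => Fop (Finset.univ : Finset (Fin 4)) ![t * x i, r * x i, s * y i, w * y i]) =
        arc x y s' c := by
  have ht : t = 1 := by
    rw [← h]
    refine (Fop_dom hr hst (hw.trans hst) hr' hst' ?_).symm
    rintro rfl
    rw [abs_neg] at hw
    rcases abs_eq_abs.1 (le_antisymm hst hw) with rfl | rfl
    · exact hw' rfl
    · exact hst' rfl
  subst ht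
  rw [abs_one] at hr hst
  have hs := abs_le.1 hst
  refine ⟨s, bop r (-(w / s)), lt_of_le_of_ne hs.1 hst'.symm, hs.2, ?_, funext fun i => ?_⟩
  · apply abs_bop_le hr
    rw [abs_neg, abs_div]
    exact div_le_one_of_le₀ hw (abs_nonneg _)
  · rw [Fop_arc hr hr' hw hw']
    rfl

/-- Every point of the line is `x`, `y`, on a ray, or on one of the two arcs. -/
lemma fLine_cases {n : ℕ} {x y z : Fin n → ℝ} (hz : z ∈ fLine x y) :
    z = x ∨ z = y ∨ (∃ t, 1 ≤ |t| ∧ z = ray x y t) ∨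
      (∃ s c, -1 < s ∧ s ≤ 1 ∧ |c| ≤ 1 ∧ z = arc x y s c) ∨
      (∃ s c, -1 < s ∧ s ≤ 1 ∧ |c| ≤ 1 ∧ z = arc y x s c) := by
  obtain ⟨t, r, s, w, h, rfl⟩ := hz
  by_cases hrt : r = -t
  · subst hrt
    right; left
    funext i
    rw [Fop_cancel_inner] at h
    rw [neg_mul, Fop_cancel_inner, bop_mul, h, one_mul]
  by_cases hws : w = -s
  · subst hws
    left
    funext i
    rw [Fop_swap_pairs, Fop_cancel_inner] at h
    rw [Fop_swap_pairs, neg_mul, Fop_cancel_inner, bop_mul, h, one_mul]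
  right; right
  -- the entries within each pair may be exchanged
  wlog hr : |r| ≤ |t| generalizing t r
  · have := this r t (by rwa [Fop_swap01]) (fun h => hrt (by linarith)) (le_of_not_ge hr)
    simpa only [fun i => Fop_swap01 (r * x i) (t * x i)] using this
  wlog hw : |w| ≤ |s| generalizing s w
  · have := this w s (fun h => hws (by linarith)) (by rwa [Fop_swap23]) (le_of_not_ge hw)
    simpa only [fun i => Fop_swap23 (t * x i) (r * x i) (w * y i) (s * y i)] using this
  by_cases hst : s = -t
  · subst hst
    left
    rw [Fop_cancel_cross] at h
    rw [abs_neg] at hw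
    refine ⟨t, ?_, funext fun i => ?_⟩
    · have := abs_bop_le hr hw
      rwa [h, abs_one] at this
    · rw [Fop_ray hr hrt hw (by rwa [neg_neg] at hws) h]
      rfl
  right
  rcases le_total |s| |t| with hle | hle
  · left
    exact exists_arc x y hr hrt hw hws hle hst h
  · right
    simp only [fun i => Fop_swap_pairs (t * x i) (r * x i) (s * y i) (w * y i)]
    exact exists_arc y x hw hws hr hrt hle (fun h' => hst (by linarith))
      (by rwa [Fop_swap_pairs])

/-! ### Joining the pieces -/

lemma joinedIn_of_Icc {E : Type*} [TopologicalSpace E] {D : Set E} {f : ℝ → E}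
    (hf : Continuous f) {a b : ℝ} (hab : a ≤ b) (h : ∀ t ∈ Set.Icc a b, f t ∈ D) :
    JoinedIn D (f a) (f b) := by
  have h1 : IsPathConnected (Set.Icc a b) :=
    (convex_Icc a b).isPathConnected ⟨a, Set.left_mem_Icc.2 hab⟩
  have h2 := (h1.image hf).joinedIn (f a) ⟨a, Set.left_mem_Icc.2 hab, rfl⟩ (f b)
    ⟨b, Set.right_mem_Icc.2 hab, rfl⟩
  exact h2.mono (Set.image_subset_iff.2 h)

lemma arc_joined_bridge {n : ℕ} {x v : Fin n → ℝ} {D : Set (Fin n → ℝ)} {s c : ℝ} (hc : |c| ≤ 1)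
    (h : ∀ c', |c'| ≤ 1 → arc x v s c' ∈ D) : JoinedIn D (arc x v s c) (arc x v s 1) := by
  rw [abs_le] at hc
  refine joinedIn_of_Icc (f := fun c' => arc x v s c') ?_ hc.2 ?_
  · refine continuous_pi fun i => ?_
    simp only [arc]
    split_ifs <;> fun_prop
  · exact fun c' hc' => h c' (abs_le.2 ⟨hc.1.trans hc'.1, hc'.2⟩)

/-- Nearby points of the arc are joined. To the left of `τ₀` the arc continues `arc x v τ₀ 1`
affinely, to the right it continues `arc x v τ₀ (-1)`, and the bridge at `τ₀` joins the two. -/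
lemma arc_joined_nhds {n : ℕ} {x v : Fin n → ℝ} {D : Set (Fin n → ℝ)}
    (h : ∀ s c, 0 ≤ s → s < 1 → |c| ≤ 1 → arc x v s c ∈ D) (h1 : arc x v 1 1 ∈ D)
    {τ₀ : ℝ} (hτ₀ : τ₀ ∈ Set.Icc (0 : ℝ) 1) :
    ∀ᶠ τ in nhdsWithin τ₀ (Set.Icc (0 : ℝ) 1), JoinedIn D (arc x v τ₀ 1) (arc x v τ 1) := by
  have hmem : ∀ s ∈ Set.Icc (0 : ℝ) 1, arc x v s 1 ∈ D := by
    intro s hs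
    rcases hs.2.lt_or_eq with hlt | rfl
    · exact h s 1 hs.1 hlt (by simp)
    · exact h1
  have hstab : ∀ᶠ τ in nhds τ₀, ∀ i, (|τ₀ * v i| < |x i| → |τ * v i| < |x i|) ∧
      (|x i| < |τ₀ * v i| → |x i| < |τ * v i|) := by
    rw [Filter.eventually_all]
    intro i
    have hcont : Filter.Tendsto (fun τ : ℝ => |τ * v i|) (nhds τ₀) (nhds |τ₀ * v i|) :=
      Continuous.tendsto (by fun_prop) τ₀
    refine Filter.Eventually.and ?_ ?_
    · by_cases hi : |τ₀ * v i| < |x i|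
      · filter_upwards [hcont.eventually_lt_const hi] with τ hτ _ using hτ
      · exact Filter.Eventually.of_forall fun τ h' => absurd h' hi
    · by_cases hi : |x i| < |τ₀ * v i|
      · filter_upwards [hcont.eventually_const_lt hi] with τ hτ _ using hτ
      · exact Filter.Eventually.of_forall fun τ h' => absurd h' hi
  obtain ⟨ε, hε, hball⟩ := Metric.eventually_nhds_iff.1 hstab
  have hmul : ∀ {τ : ℝ} (i : Fin n), 0 ≤ τ → |τ * v i| = τ * |v i| := by
    intro τ i hτ
    rw [abs_mul, abs_of_nonneg hτ]
  have hleft : ∀ τ, 0 ≤ τ → dist τ τ₀ < ε → τ ≤ τ₀ →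
      arc x v τ 1 = fun i => if |τ₀ * v i| ≤ |x i| then x i else τ * v i := by
    intro τ hτ hd hle
    funext i
    have hst := hball hd i
    have hmono : |τ * v i| ≤ |τ₀ * v i| := by
      rw [hmul i hτ, hmul i hτ₀.1]
      exact mul_le_mul_of_nonneg_right hle (abs_nonneg _)
    by_cases hi : |τ₀ * v i| ≤ |x i|
    · simp only [arc, hi, if_true, one_mul]
      split_ifs with _ h2
      · rfl
      · exact absurd (hmono.trans hi) h2.not_ge
      all_goals rfl
    · have h2 := hst.2 (not_le.1 hi)
      simp only [arc, hi, h2, h2.not_gt, if_true, if_false]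
  have hright : ∀ τ, dist τ τ₀ < ε → τ₀ < τ →
      arc x v τ 1 = fun i => if |x i| ≤ |τ₀ * v i| then τ * v i else x i := by
    intro τ hd hlt
    funext i
    have hst := hball hd i
    by_cases hi : |x i| ≤ |τ₀ * v i|
    · simp only [hi, if_true]
      by_cases hv : v i = 0
      · have hx : x i = 0 := by simpa [hv] using hi
        simp [arc, hv, hx]
      · have h2 : |x i| < |τ * v i| := by
          refine hi.trans_lt ?_
          rw [hmul i hτ₀.1, hmul i (hτ₀.1.trans hlt.le)]
          exact mul_lt_mul_of_pos_right hlt (abs_pos.2 hv)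
        simp only [arc, h2, h2.not_gt, if_true, if_false]
    · have h2 := hst.1 (not_le.1 hi)
      simp only [arc, hi, h2, if_true, if_false]
  have hright₀ : arc x v τ₀ (-1) = fun i => if |x i| ≤ |τ₀ * v i| then τ₀ * v i else x i := by
    funext i
    simp only [arc]
    rcases lt_trichotomy |τ₀ * v i| |x i| with hi | hi | hi
    · rw [if_pos hi, if_neg hi.not_ge]
    · rw [if_neg hi.not_lt, if_neg hi.not_gt, if_pos hi.ge]
      split_ifs with he
      · exact he.symm
      · rw [(abs_eq_abs.1 hi).resolve_left he]; ring
    · rw [if_neg hi.not_gt, if_pos hi, if_pos hi.le]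
  rw [eventually_nhdsWithin_iff, Metric.eventually_nhds_iff]
  refine ⟨ε, hε, fun τ hd hτ => ?_⟩
  rcases le_or_gt τ τ₀ with hle | hlt
  · have hnear : ∀ t ∈ Set.Icc τ τ₀, dist t τ₀ < ε := by
      intro t ht
      rw [Real.dist_eq, abs_lt] at hd ⊢
      constructor <;> linarith [ht.1, ht.2]
    have := joinedIn_of_Icc (D := D)
      (f := fun t => fun i => if |τ₀ * v i| ≤ |x i| then x i else t * v i)
      (continuous_pi fun i => by split_ifs <;> fun_prop) hle (by
        intro t ht
        have ht0 := hτ.1.trans ht.1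
        have := hmem t ⟨ht0, ht.2.trans hτ₀.2⟩
        rwa [hleft t ht0 (hnear t ht) ht.2] at this)
    rw [hleft τ hτ.1 hd hle, hleft τ₀ hτ₀.1 (by simpa) le_rfl]
    exact this.symm
  · have hnear : ∀ t ∈ Set.Icc τ₀ τ, dist t τ₀ < ε := by
      intro t ht
      rw [Real.dist_eq, abs_lt] at hd ⊢
      constructor <;> linarith [ht.1, ht.2]
    have hτ₀1 : τ₀ < 1 := hlt.trans_le hτ.2
    have := joinedIn_of_Icc (D := D)
      (f := fun t => fun i => if |x i| ≤ |τ₀ * v i| then t * v i else x i)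
      (continuous_pi fun i => by split_ifs <;> fun_prop) hlt.le (by
        intro t ht
        rcases ht.1.eq_or_lt with rfl | ht'
        · have := h τ₀ (-1) hτ₀.1 hτ₀1 (by simp)
          rwa [hright₀] at this
        · have := hmem t ⟨hτ₀.1.trans ht.1, ht.2.trans hτ.2⟩
          rwa [hright t (hnear t ht) ht'] at this)
    have hb := arc_joined_bridge (c := -1) (by simp) fun c' hc' => h τ₀ c' hτ₀.1 hτ₀1 hc'
    rw [hright₀] at hb
    rw [hright τ hd hlt]
    exact hb.symm.trans this

lemma arc_joined {n : ℕ} {x v : Fin n → ℝ} {D : Set (Fin n → ℝ)}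
    (h : ∀ s c, 0 ≤ s → s < 1 → |c| ≤ 1 → arc x v s c ∈ D) (h1 : arc x v 1 1 ∈ D)
    {τ : ℝ} (hτ : τ ∈ Set.Icc (0 : ℝ) 1) : JoinedIn D (arc x v τ 1) x := by
  have := isPreconnected_Icc.induction₂ (s := Set.Icc (0 : ℝ) 1)
    (fun a b => JoinedIn D (arc x v a 1) (arc x v b 1))
    (fun a ha => arc_joined_nhds h h1 ha) (fun a b c _ _ _ hab hbc => hab.trans hbc)
    (fun a b _ _ hab => hab.symm) hτ (Set.left_mem_Icc.2 zero_le_one)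
  rwa [arc_zero] at this

lemma arc_neg {n : ℕ} (x y : Fin n → ℝ) (s c : ℝ) : arc x (-y) s c = arc x y (-s) c := by
  funext i
  simp [arc]

/-- The end `s = -1` of the arc is the start of a ray. -/
lemma arc_neg_one {n : ℕ} (x y : Fin n → ℝ) : arc x y (-1) 1 = ray x y 1 := by
  funext i
  simp only [arc, ray, one_mul, neg_mul, abs_neg]
  rcases lt_trichotomy |y i| |x i| with hi | hi | hi
  · rw [if_pos hi, if_pos hi.le, ite_self]
  · rw [if_neg hi.not_lt, if_neg hi.not_gt, if_pos hi.le, ite_self, ite_self]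
  · have hne : x i ≠ y i := fun h => by simp [h] at hi
    rw [if_neg hi.not_gt, if_pos hi, if_neg hi.not_ge, if_neg hne]

lemma ray_comm {n : ℕ} (x y : Fin n → ℝ) (t : ℝ) : ray x y t = ray y x (-t) := by
  funext i
  simp only [ray]
  by_cases hxy : x i = y i
  · simp [hxy]
  · rw [if_neg hxy, if_neg (Ne.symm hxy)]
    rcases lt_trichotomy |x i| |y i| with h | h | h
    · rw [if_neg h.not_ge, if_pos h.le]; ring
    · rw [if_pos h.ge, if_pos h.le]
      rw [(abs_eq_abs.1 h).resolve_left hxy]; ring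
    · rw [if_pos h.le, if_neg h.not_ge]; ring

lemma arc_joined_left {n : ℕ} (x y : Fin n → ℝ) {s c : ℝ} (hs : -1 < s) (hs' : s ≤ 1)
    (hc : |c| ≤ 1) : JoinedIn (fLine x y) (arc x y s c) x := by
  refine (arc_joined_bridge hc fun c' hc' => arc_mem x y hs hs' hc').trans ?_
  rcases le_total 0 s with h | h
  · exact arc_joined (fun s c h0 h1 hc => arc_mem x y (by linarith) h1.le hc)
      (arc_mem x y (by norm_num) le_rfl (by simp)) ⟨h, hs'⟩
  · have := arc_joined (x := x) (v := -y) (D := fLine x y)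
      (fun s c h0 h1 hc => by rw [arc_neg]; exact arc_mem x y (by linarith) (by linarith) hc)
      (by rw [arc_neg, arc_neg_one]; exact ray_mem x y (by simp))
      (τ := -s) ⟨by linarith, by linarith⟩
    rwa [arc_neg, neg_neg] at this

lemma ray_joined_left {n : ℕ} (x y : Fin n → ℝ) {t : ℝ} (ht : 1 ≤ t) :
    JoinedIn (fLine x y) (ray x y t) x := by
  have h1 := joinedIn_of_Icc (D := fLine x y) (f := fun t => ray x y t)
    (continuous_pi fun i => by simp only [ray]; split_ifs <;> fun_prop) ht
    (fun t' ht' => ray_mem x y (le_abs.2 (Or.inl ht'.1)))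
  refine h1.symm.trans ?_
  have := arc_joined (x := x) (v := -y) (D := fLine x y)
    (fun s c h0 h1 hc => by rw [arc_neg]; exact arc_mem x y (by linarith) (by linarith) hc)
    (by rw [arc_neg, arc_neg_one]; exact ray_mem x y (by simp))
    (τ := 1) ⟨by linarith, by linarith⟩
  rwa [arc_neg, arc_neg_one] at this

/-- The arcs issuing from `x` and from `y` meet at `s = 1`. -/
lemma arc_one_comm {n : ℕ} (x y : Fin n → ℝ) : arc x y 1 1 = arc y x 1 (-1) := by
  funext i
  simp only [arc, one_mul]
  rcases lt_trichotomy |x i| |y i| with h | h | h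
  · simp [h, h.not_gt]
  · rcases abs_eq_abs.1 h with h' | h'
    · simp [h']
    · simp [h']
  · simp [h, h.not_gt]

lemma right_joined_left {n : ℕ} (x y : Fin n → ℝ) : JoinedIn (fLine x y) y x := by
  have h1 := arc_joined_left x y (s := 1) (c := 1) (by norm_num) le_rfl (by simp)
  have h2 := arc_joined_left y x (s := 1) (c := -1) (by norm_num) le_rfl (by simp)
  rw [fLine_comm, ← arc_one_comm] at h2
  exact h2.symm.trans h1

/-- the F-line `D^∞(x,y)` is path-connected. -/
theorem stmt19 (n : ℕ) (x y : Fin n → ℝ) (hxy : x ≠ y) :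
    IsPathConnected (fLine x y) := by
  refine ⟨x, left_mem x y, fun {z} hz => ?_⟩
  symm
  have hyx := right_joined_left x y
  rcases fLine_cases hz with rfl | rfl | ⟨t, ht, rfl⟩ | ⟨s, c, h1, h2, h3, rfl⟩ |
    ⟨s, c, h1, h2, h3, rfl⟩
  · exact JoinedIn.refl (left_mem _ y)
  · exact hyx
  · rcases le_abs.1 ht with h | h
    · exact ray_joined_left x y h
    · have := ray_joined_left y x h
      rw [← ray_comm, fLine_comm] at this
      exact this.trans hyx
  · exact arc_joined_left x y h1 h2 h3
  · have := arc_joined_left y x h1 h2 h3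
    rw [fLine_comm] at this
    exact this.trans hyx
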